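/- There exist an absolute constant K > 0 and x₀ ≥ 1 such that for every integer n ≥ 1 and every real x ≥ x₀ one has |S(√x; n) − cₙ·x| ≤ K·2^{−n}·x^{1/4}, where cₙ = −(π/(√2·2ⁿ·n·(n+3/2)))·∏_{k=1}^{n−1}(1 − 1/(2k)). -/

import Mathlib

open Real

/-- `r₂(m)`: the number of representations of `m` as a sum of two squares of integers. -/
noncomputable def r2 (m : ℕ) : ℕ :=
  Set.ncard {p : ℤ × ℤ | p.1 ^ 2 + p.2 ^ 2 = (m : ℤ)}

/-- The coefficients `C₀ = √2` and `Cₙ = −(1/(√2·2ⁿ·n))·∏_{k=1}^{n−1}(1 − 1/(2k))` for `n ≥ 1`. -/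
noncomputable def Ccoef (n : ℕ) : ℝ :=
  if n = 0 then Real.sqrt 2
  else -(1 / (Real.sqrt 2 * 2 ^ n * n)) * ∏ k ∈ Finset.Icc 1 (n - 1), (1 - 1 / (2 * (k : ℝ)))

/-- `S(√x; n) = Cₙ·x^{1/4−n/2}·Σ_{m ∈ ℕ, m ≤ √x} r₂(m)·(√x − m)^{n+1/2}`. -/
noncomputable def Sxn (x : ℝ) (n : ℕ) : ℝ :=
  Ccoef n * x ^ ((1 : ℝ) / 4 - n / 2) *
    ∑ m ∈ Finset.range (⌊Real.sqrt x⌋₊ + 1),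
      (r2 m : ℝ) * (Real.sqrt x - m) ^ ((n : ℝ) + 1 / 2)

/-- `cₙ = −(π/(√2·2ⁿ·n·(n+3/2)))·∏_{k=1}^{n−1}(1 − 1/(2k))` for `n ≥ 1`. -/
noncomputable def cn (n : ℕ) : ℝ :=
  -(Real.pi / (Real.sqrt 2 * 2 ^ n * n * (n + 3 / 2))) *
    ∏ k ∈ Finset.Icc 1 (n - 1), (1 - 1 / (2 * (k : ℝ)))

/-!
Up to the factor `Cₙ x^{1/4 - n/2}`, the quantity to be bounded is the error
`Eₙ(T) = ∑_{m ≤ T} r₂(m) (T - m)^{n + 1/2} - π T^{n + 3/2} / (n + 3/2)` at `T = √x`. Since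
`Eₙ₊₁(T) = (n + 3/2) ∫₀ᵀ Eₙ`, the bound `Eₙ(T) = O(n Tⁿ)` for all `n ≥ 1` follows by induction
from `E₁(T) = O(T)`.

For `n = 1` the sum runs over the lattice `ℤ[i]` with the weight `(T - |z|²)₊^{3/2}`, and Poisson
summation turns it into the sum of the Fourier transform of this weight over the dual lattice. The
term at the origin is the main term. The weight is radial, so its transform may be computed along
one axis; integrating out the other coordinate leaves a multiple of the one-dimensional transform of
`(T - s²)₊²`, which is `O(T |w|⁻³)` by three integrations by parts. As `∑ |w|⁻³` converges over the
nonzero lattice points, the remaining terms contribute `O(T)`.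
-/

open MeasureTheory FourierTransform Filter Set

section TruncPow

variable {α : ℝ}

/-- The truncated power `u₊ ^ α`, the kernel of Riesz means of order `α`. -/
noncomputable def truncPow (α u : ℝ) : ℝ := max u 0 ^ α

theorem truncPow_of_nonneg {u : ℝ} (hu : 0 ≤ u) : truncPow α u = u ^ α := by
  rw [truncPow, max_eq_left hu]

theorem truncPow_of_nonpos (hα : α ≠ 0) {u : ℝ} (hu : u ≤ 0) : truncPow α u = 0 := by
  rw [truncPow, max_eq_right hu, zero_rpow hα]

theorem continuous_truncPow (hα : 0 ≤ α) : Continuous (truncPow α) :=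
  (continuous_id.max continuous_const).rpow_const fun _ => Or.inr hα

theorem integral_truncPow (hα : 0 < α) (b : ℝ) :
    ∫ u in (0 : ℝ)..b, truncPow α u = truncPow (α + 1) b / (α + 1) := by
  have hα' : α + 1 ≠ 0 := by positivity
  rcases le_total 0 b with hb | hb
  · have h : ∫ u in (0 : ℝ)..b, truncPow α u = ∫ u in (0 : ℝ)..b, u ^ α :=
      intervalIntegral.integral_congr fun u hu =>
        truncPow_of_nonneg (by rw [uIcc_of_le hb] at hu; exact hu.1)
    rw [h, integral_rpow (Or.inl (by linarith)), zero_rpow hα', sub_zero, truncPow_of_nonneg hb]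
  · have h : ∫ u in (0 : ℝ)..b, truncPow α u = ∫ _ in (0 : ℝ)..b, (0 : ℝ) :=
      intervalIntegral.integral_congr fun u hu =>
        truncPow_of_nonpos hα.ne' (by rw [uIcc_of_ge hb] at hu; exact hu.2)
    rw [h, intervalIntegral.integral_zero, truncPow_of_nonpos hα' hb, zero_div]

theorem integral_truncPow_sub (hα : 0 < α) {c : ℝ} (hc : 0 ≤ c) (b : ℝ) :
    ∫ t in (0 : ℝ)..b, truncPow α (t - c) = truncPow (α + 1) (b - c) / (α + 1) := by
  have hint (x y : ℝ) : IntervalIntegrable (truncPow α) volume x y :=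
    (continuous_truncPow hα.le).intervalIntegrable x y
  rw [intervalIntegral.integral_comp_sub_right (truncPow α), zero_sub,
    ← intervalIntegral.integral_interval_sub_left (hint 0 (b - c)) (hint 0 (-c)),
    integral_truncPow hα, integral_truncPow hα,
    truncPow_of_nonpos (by positivity) (neg_nonpos.2 hc), zero_div, sub_zero]

end TruncPow

section GaussianPoint

/-- The point `a + bi` of the lattice `ℤ[i] ⊆ ℂ`, indexed by pairs as in `r2`. -/
noncomputable def gaussianPoint (p : ℤ × ℤ) : ℂ := (p.1 : ℝ) + (p.2 : ℝ) * Complex.I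

theorem sq_norm_gaussianPoint (p : ℤ × ℤ) :
    ‖gaussianPoint p‖ ^ 2 = (p.1 : ℝ) ^ 2 + (p.2 : ℝ) ^ 2 := by
  rw [gaussianPoint, Complex.norm_add_mul_I, sq_sqrt (by positivity)]

theorem norm_le_norm_gaussianPoint (p : ℤ × ℤ) : ‖p‖ ≤ ‖gaussianPoint p‖ := by
  refine max_le ?_ ?_
  · simpa [gaussianPoint, Int.norm_eq_abs] using Complex.abs_re_le_norm (gaussianPoint p)
  · simpa [gaussianPoint, Int.norm_eq_abs] using Complex.abs_im_le_norm (gaussianPoint p)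

theorem gaussianPoint_ne_zero {p : ℤ × ℤ} (hp : p ≠ 0) : gaussianPoint p ≠ 0 :=
  norm_pos_iff.1 ((norm_pos_iff.2 hp).trans_le (norm_le_norm_gaussianPoint p))

theorem finite_setOf_norm_gaussianPoint_le (R : ℝ) : {p | ‖gaussianPoint p‖ ≤ R}.Finite :=
  (isCompact_closedBall (0 : ℤ × ℤ) R).finite_of_discrete.subset fun p hp =>
    mem_closedBall_zero_iff.2 ((norm_le_norm_gaussianPoint p).trans hp)

theorem summable_norm_gaussianPoint_rpow {s : ℝ} (hs : 2 < s) :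
    Summable fun p => ‖gaussianPoint p‖ ^ (-s) := by
  have hnorm (p : ℤ × ℤ) : ‖(finTwoArrowEquiv ℤ).symm p‖ = ‖p‖ := by
    simp [EisensteinSeries.norm_eq_max_natAbs, Prod.norm_def, Int.norm_eq_abs, Nat.cast_natAbs]
  have hsup : Summable fun p : ℤ × ℤ => ‖p‖ ^ (-s) :=
    (((finTwoArrowEquiv ℤ).symm.summable_iff).2
      (EisensteinSeries.summable_one_div_norm_rpow hs)).congr fun p => by
        rw [Function.comp_apply, hnorm]
  refine hsup.of_nonneg_of_le (fun p => by positivity) fun p => ?_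
  rcases eq_or_ne p 0 with rfl | hp
  · simp [gaussianPoint]
  · exact rpow_le_rpow_of_nonpos (norm_pos_iff.2 hp) (norm_le_norm_gaussianPoint p) (by linarith)

theorem tsum_gaussianPoint_eq_tsum_r2 {g : ℝ → ℝ}
    (hg : Summable fun p => g (‖gaussianPoint p‖ ^ 2)) :
    ∑' p, g (‖gaussianPoint p‖ ^ 2) = ∑' m : ℕ, r2 m * g m := by
  have hfiber (m : ℕ) :
      {p : ℤ × ℤ | p.1 ^ 2 + p.2 ^ 2 = m} = (fun p => p.1.natAbs ^ 2 + p.2.natAbs ^ 2) ⁻¹' {m} := by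
    ext p
    simp only [mem_ofPred_eq, mem_preimage, mem_singleton_iff]
    zify
    simp only [sq_abs]
  rw [← (hg.hasSum.tsum_fiberwise fun p => p.1.natAbs ^ 2 + p.2.natAbs ^ 2).tsum_eq]
  refine tsum_congr fun m => ?_
  rw [← hfiber, r2, ← Nat.card_coe_set_eq, ← nsmul_eq_mul, ← tsum_const]
  refine tsum_congr fun p => congrArg g ?_
  rw [sq_norm_gaussianPoint]
  exact_mod_cast p.2

end GaussianPoint

section RieszSum

variable {α T : ℝ}

/-- The unnormalised Riesz mean `∑_{m ≤ T} r₂(m) (T - m) ^ α` of order `α`. -/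
noncomputable def rieszSum (α T : ℝ) : ℝ :=
  ∑ m ∈ Finset.range (⌊T⌋₊ + 1), (r2 m : ℝ) * (T - m) ^ α

theorem rieszSum_eq_sum_truncPow (hα : α ≠ 0) (hT : 0 ≤ T) {N : ℕ} (hN : T < N) :
    rieszSum α T = ∑ m ∈ Finset.range N, (r2 m : ℝ) * truncPow α (T - m) := by
  have hsub : Finset.range (⌊T⌋₊ + 1) ⊆ Finset.range N :=
    Finset.range_subset_range.2 ((Nat.floor_lt hT).2 hN)
  rw [rieszSum, ← Finset.sum_subset hsub]
  · refine Finset.sum_congr rfl fun m hm => ?_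
    have hmT : (m : ℝ) ≤ T := (Nat.le_floor_iff hT).1 (Finset.mem_range_succ_iff.1 hm)
    rw [truncPow_of_nonneg (sub_nonneg.2 hmT)]
  · intro m _ hm
    have hmT : T ≤ m := ((Nat.floor_lt hT).1 (by simpa using hm)).le
    rw [truncPow_of_nonpos hα (sub_nonpos.2 hmT), mul_zero]

theorem rieszSum_eq_tsum_gaussianPoint (hα : α ≠ 0) (hT : 0 ≤ T) :
    rieszSum α T = ∑' p, truncPow α (T - ‖gaussianPoint p‖ ^ 2) := by
  have hsummable : Summable fun p => truncPow α (T - ‖gaussianPoint p‖ ^ 2) := by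
    refine summable_of_hasFiniteSupport ((finite_setOf_norm_gaussianPoint_le √T).subset ?_)
    intro p hp
    by_contra hlt
    have hTp : T ≤ ‖gaussianPoint p‖ ^ 2 := (sqrt_le_left (norm_nonneg _)).1 (not_le.1 hlt).le
    exact hp (truncPow_of_nonpos hα (sub_nonpos.2 hTp))
  rw [tsum_gaussianPoint_eq_tsum_r2 (g := fun t => truncPow α (T - t)) hsummable,
    rieszSum_eq_sum_truncPow hα hT (by exact_mod_cast Nat.lt_floor_add_one T : T < (⌊T⌋₊ + 1 : ℕ)),
    tsum_eq_sum]
  intro m hm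
  have hmT : T ≤ m := ((Nat.floor_lt hT).1 (by simpa using hm)).le
  rw [truncPow_of_nonpos hα (sub_nonpos.2 hmT), mul_zero]

theorem eqOn_rieszSum_sum_truncPow (hα : α ≠ 0) (hT : 0 ≤ T) {N : ℕ} (hN : T < N) :
    EqOn (rieszSum α) (fun t => ∑ m ∈ Finset.range N, (r2 m : ℝ) * truncPow α (t - m))
      (uIcc 0 T) := by
  intro t ht
  rw [uIcc_of_le hT] at ht
  exact rieszSum_eq_sum_truncPow hα ht.1 (ht.2.trans_lt hN)

theorem continuous_r2_mul_truncPow (hα : 0 ≤ α) (m : ℕ) :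
    Continuous fun t => (r2 m : ℝ) * truncPow α (t - m) :=
  continuous_const.mul ((continuous_truncPow hα).comp (continuous_sub_right _))

theorem intervalIntegrable_rieszSum (hα : 0 < α) (hT : 0 ≤ T) :
    IntervalIntegrable (rieszSum α) volume 0 T := by
  obtain ⟨N, hN⟩ := exists_nat_gt T
  refine IntervalIntegrable.congr
    ((eqOn_rieszSum_sum_truncPow hα.ne' hT hN).symm.mono uIoc_subset_uIcc) ?_
  exact (continuous_finsetSum _ fun m _ =>
    continuous_r2_mul_truncPow hα.le m).intervalIntegrable 0 T

theorem integral_rieszSum (hα : 0 < α) (hT : 0 ≤ T) :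
    ∫ t in (0 : ℝ)..T, rieszSum α t = rieszSum (α + 1) T / (α + 1) := by
  obtain ⟨N, hN⟩ := exists_nat_gt T
  rw [intervalIntegral.integral_congr (eqOn_rieszSum_sum_truncPow hα.ne' hT hN),
    intervalIntegral.integral_finsetSum fun m _ =>
      (continuous_r2_mul_truncPow hα.le m).intervalIntegrable 0 T,
    rieszSum_eq_sum_truncPow (by positivity) hT hN, Finset.sum_div]
  refine Finset.sum_congr rfl fun m _ => ?_
  rw [intervalIntegral.integral_const_mul, integral_truncPow_sub hα m.cast_nonneg, mul_div_assoc]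

/-- The deviation of the Riesz mean from its volume term
`∫_{|z|² ≤ T} (T - |z|²) ^ α = π T ^ (α + 1) / (α + 1)`. -/
noncomputable def rieszError (α T : ℝ) : ℝ := rieszSum α T - π / (α + 1) * T ^ (α + 1)

theorem rieszError_add_one (hα : 0 < α) (hT : 0 ≤ T) :
    rieszError (α + 1) T = (α + 1) * ∫ t in (0 : ℝ)..T, rieszError α t := by
  have hα1 : 0 < α + 1 := by positivity
  have hpow : IntervalIntegrable (fun t : ℝ => π / (α + 1) * t ^ (α + 1)) volume 0 T :=
    (intervalIntegral.intervalIntegrable_rpow (Or.inl hα1.le)).const_mul _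
  simp only [rieszError]
  rw [intervalIntegral.integral_sub (intervalIntegrable_rieszSum hα hT) hpow,
    integral_rieszSum hα hT, intervalIntegral.integral_const_mul,
    integral_rpow (Or.inl (by linarith)), zero_rpow (by positivity)]
  field_simp
  ring

theorem abs_rieszError_add_one_le (hα : 0 < α) {K : ℝ} {n : ℕ}
    (hK : ∀ t, 0 ≤ t → |rieszError α t| ≤ K * t ^ n) (hT : 0 ≤ T) :
    |rieszError (α + 1) T| ≤ (α + 1) * (K * (T ^ (n + 1) / (n + 1))) := by
  have hint : IntervalIntegrable (fun t : ℝ => K * t ^ n) volume 0 T :=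
    (by fun_prop : Continuous fun t : ℝ => K * t ^ n).intervalIntegrable 0 T
  have hle : |∫ t in (0 : ℝ)..T, rieszError α t| ≤ ∫ t in (0 : ℝ)..T, K * t ^ n :=
    intervalIntegral.norm_integral_le_of_norm_le (f := rieszError α) hT
      (Eventually.of_forall fun t ht => hK t ht.1.le) hint
  rw [intervalIntegral.integral_const_mul, integral_pow, zero_pow n.succ_ne_zero, sub_zero] at hle
  rw [rieszError_add_one hα hT, abs_mul, abs_of_pos (by positivity)]
  gcongr

end RieszSum

section Fourier

theorem fourier_eq_of_norm_eq {V E : Type*} [NormedAddCommGroup V] [InnerProductSpace ℝ V]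
    [FiniteDimensional ℝ V] [MeasurableSpace V] [BorelSpace V] [NormedAddCommGroup E]
    [NormedSpace ℂ E] {f : V → E} (hf : ∀ v w, ‖v‖ = ‖w‖ → f v = f w) {v w : V} (h : ‖v‖ = ‖w‖) :
    𝓕 f v = 𝓕 f w := by
  set A := (ℝ ∙ (v - w))ᗮ.reflection
  have hfA : f ∘ A = f := funext fun u => hf _ _ (A.norm_map u)
  rw [← Submodule.reflection_sub h, ← Real.fourier_comp_linearIsometry, hfA]

theorem fourier_add_mul_I_eq_fourier_fourier {E : Type*} [NormedAddCommGroup E] [NormedSpace ℂ E]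
    {f : ℂ → E} (hf : Integrable f) (k l : ℝ) :
    𝓕 f (k + l * Complex.I) = 𝓕 (fun y : ℝ => 𝓕 (fun x : ℝ => f (x + y * Complex.I)) k) l := by
  set w : ℂ := k + l * Complex.I
  have hint : Integrable fun z => 𝐞 (-inner ℝ z w) • f z :=
    (Real.fourierIntegral_convergent_iff w).2 hf
  have hprod : MeasurePreserving Complex.measurableEquivRealProd.symm :=
    Complex.volume_preserving_equiv_real_prod.symm
  have hemb := Complex.measurableEquivRealProd.symm.measurableEmbedding
  have hint' := (hprod.integrable_comp_emb hemb).2 hint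
  rw [Measure.volume_eq_prod] at hint'
  rw [Real.fourier_eq, ← hprod.integral_comp hemb, Measure.volume_eq_prod]
  refine (integral_prod_symm _ hint').trans ?_
  rw [Real.fourier_real_eq]
  refine integral_congr_ae (ae_of_all _ fun y => ?_)
  simp only [Real.fourier_real_eq, Circle.smul_def]
  rw [← integral_smul]
  refine integral_congr_ae (ae_of_all _ fun x => ?_)
  have hinner : inner ℝ (x + y * Complex.I : ℂ) w = y * l + x * k := by
    simp [w, Complex.inner, mul_comm, add_comm]
  simp only [Function.comp_apply, Complex.measurableEquivRealProd_symm_apply,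
    Complex.mk_eq_add_mul_I, hinner, neg_add, AddChar.map_add_eq_mul, smul_smul, Circle.coe_mul]

theorem fourier_finsetSum {ι V E : Type*} [NormedAddCommGroup V] [InnerProductSpace ℝ V]
    [MeasurableSpace V] [BorelSpace V] [FiniteDimensional ℝ V] [NormedAddCommGroup E]
    [NormedSpace ℂ E] {s : Finset ι} {g : ι → V → E} (hg : ∀ i ∈ s, Integrable (g i)) (w : V) :
    𝓕 (fun v => ∑ i ∈ s, g i v) w = ∑ i ∈ s, 𝓕 (g i) w := by
  simp only [Real.fourier_eq, Finset.smul_sum]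
  exact integral_finsetSum s fun i hi => (Real.fourierIntegral_convergent_iff w).2 (hg i hi)

theorem tsum_eq_tsum_fourier_of_hasCompactSupport {f : ℝ → ℂ} (hc : Continuous f)
    (hf : HasCompactSupport f) (hs : Summable fun n : ℤ => 𝓕 f n) :
    ∑' n : ℤ, f n = ∑' n : ℤ, 𝓕 f n := by
  have hdecay : f =O[cocompact ℝ] fun x => |x| ^ (-2 : ℝ) := by
    have hzero := hasCompactSupport_iff_eventuallyEq.1 hf
    rw [coclosedCompact_eq_cocompact] at hzero
    exact hzero.trans_isBigO (Asymptotics.isBigO_zero _ _)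
  simpa using Real.tsum_eq_tsum_fourier_of_rpow_decay_of_summable hc one_lt_two hdecay hs 0

variable {f : ℂ → ℂ}

theorem exists_forall_lt_abs_eq_zero (hf : HasCompactSupport f) :
    ∃ R : ℝ, ∀ x y : ℝ, R < |x| ∨ R < |y| → f (x + y * Complex.I) = 0 := by
  obtain ⟨R, -, hR⟩ := hf.exists_pos_le_norm
  refine ⟨R, fun x y hxy => hR _ (hxy.elim (fun hx => ?_) fun hy => ?_)⟩
  · simpa using hx.le.trans (by simpa using Complex.abs_re_le_norm (x + y * Complex.I))
  · simpa using hy.le.trans (by simpa using Complex.abs_im_le_norm (x + y * Complex.I))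

theorem hasCompactSupport_row (hf : HasCompactSupport f) (y : ℝ) :
    HasCompactSupport fun x : ℝ => f (x + y * Complex.I) := by
  obtain ⟨R, hR⟩ := exists_forall_lt_abs_eq_zero hf
  exact HasCompactSupport.intro (isCompact_closedBall 0 R) fun x hx =>
    hR x y (Or.inl (by simpa using hx))

theorem continuous_fourier_row (hc : Continuous f) (hf : HasCompactSupport f) (k : ℝ) :
    Continuous fun y : ℝ => 𝓕 (fun x : ℝ => f (x + y * Complex.I)) k := by
  obtain ⟨R, hR⟩ := exists_forall_lt_abs_eq_zero hf
  simp only [Real.fourier_real_eq_integral_exp_smul, ← continuousOn_univ]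
  refine continuousOn_integral_of_compact_support (isCompact_closedBall (0 : ℝ) R)
    (by fun_prop) fun y x _ hx => ?_
  rw [hR x y (Or.inl (by simpa using hx)), smul_zero]

theorem hasCompactSupport_fourier_row (hf : HasCompactSupport f) (k : ℝ) :
    HasCompactSupport fun y : ℝ => 𝓕 (fun x : ℝ => f (x + y * Complex.I)) k := by
  obtain ⟨R, hR⟩ := exists_forall_lt_abs_eq_zero hf
  refine HasCompactSupport.intro (isCompact_closedBall 0 R) fun y hy => ?_
  have hrow (x : ℝ) : f (x + y * Complex.I) = 0 := hR x y (Or.inr (by simpa using hy))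
  simp only [hrow, Real.fourier_real_eq, smul_zero, integral_zero]

theorem tsum_fourier_gaussianPoint_row (hc : Continuous f) (hf : HasCompactSupport f) (k : ℤ)
    (hs : Summable fun l : ℤ => 𝓕 f (gaussianPoint (k, l))) :
    ∑' b : ℤ, 𝓕 (fun x : ℝ => f (x + (b : ℝ) * Complex.I)) k =
      ∑' l : ℤ, 𝓕 f (gaussianPoint (k, l)) := by
  have hiter (l : ℤ) :=
    fourier_add_mul_I_eq_fourier_fourier (hc.integrable_of_hasCompactSupport hf) k l
  simp only [gaussianPoint, hiter] at hs ⊢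
  exact tsum_eq_tsum_fourier_of_hasCompactSupport (continuous_fourier_row hc hf k)
    (hasCompactSupport_fourier_row hf k) hs

theorem exists_finset_forall_row_eq_zero (hf : HasCompactSupport f) :
    ∃ s : Finset ℤ, ∀ b ∉ s, ∀ x : ℝ, f (x + (b : ℝ) * Complex.I) = 0 := by
  obtain ⟨R, hR⟩ := exists_forall_lt_abs_eq_zero hf
  refine ⟨Finset.Icc (-⌈R⌉) ⌈R⌉, fun b hb x => hR x b (Or.inr ?_)⟩
  rw [Finset.mem_Icc, ← abs_le, not_le] at hb
  exact (Int.le_ceil R).trans_lt (by exact_mod_cast hb)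

theorem summable_gaussianPoint_of_hasCompactSupport (hf : HasCompactSupport f) :
    Summable fun p => f (gaussianPoint p) := by
  obtain ⟨R, -, hR⟩ := hf.exists_pos_le_norm
  refine summable_of_hasFiniteSupport ((finite_setOf_norm_gaussianPoint_le R).subset ?_)
  exact fun p hp => (not_le.1 fun hlt => hp (hR _ hlt)).le

theorem tsum_gaussianPoint_eq_tsum_tsum_fourier_row (hc : Continuous f) (hf : HasCompactSupport f)
    (hs : Summable fun k : ℤ => ∑' b : ℤ, 𝓕 (fun x : ℝ => f (x + (b : ℝ) * Complex.I)) k) :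
    ∑' p, f (gaussianPoint p) =
      ∑' k : ℤ, ∑' b : ℤ, 𝓕 (fun x : ℝ => f (x + (b : ℝ) * Complex.I)) k := by
  obtain ⟨s, hzero⟩ := exists_finset_forall_row_eq_zero hf
  -- Poisson summation is applied to the sum `P` of all nonzero rows at once: the Fourier
  -- coefficients of a single row need not be summable.
  set P : ℝ → ℂ := fun x => ∑ b ∈ s, f (x + (b : ℝ) * Complex.I)
  have hPc : Continuous P := by fun_prop
  have hPs : HasCompactSupport P := by
    obtain ⟨R, hR⟩ := exists_forall_lt_abs_eq_zero hf
    exact HasCompactSupport.intro (isCompact_closedBall 0 R) fun x hx =>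
      Finset.sum_eq_zero fun b _ => hR x b (Or.inl (by simpa using hx))
  have hPF (k : ℤ) : 𝓕 P k = ∑' b : ℤ, 𝓕 (fun x : ℝ => f (x + (b : ℝ) * Complex.I)) k := by
    rw [tsum_eq_sum (s := s), fourier_finsetSum]
    · exact fun b _ => (by fun_prop : Continuous fun x : ℝ =>
        f (x + (b : ℝ) * Complex.I)).integrable_of_hasCompactSupport (hasCompactSupport_row hf b)
    · intro b hb
      simp only [hzero b hb, Real.fourier_real_eq, smul_zero, integral_zero]
  calc ∑' p, f (gaussianPoint p) = ∑' a : ℤ, ∑' b : ℤ, f (gaussianPoint (a, b)) :=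
        (summable_gaussianPoint_of_hasCompactSupport hf).tsum_prod
    _ = ∑' a : ℤ, P a := tsum_congr fun a => tsum_eq_sum fun b hb => hzero b hb a
    _ = ∑' k : ℤ, 𝓕 P k :=
        tsum_eq_tsum_fourier_of_hasCompactSupport hPc hPs (hs.congr fun k => (hPF k).symm)
    _ = ∑' k : ℤ, ∑' b : ℤ, 𝓕 (fun x : ℝ => f (x + (b : ℝ) * Complex.I)) k := tsum_congr hPF

theorem tsum_gaussianPoint_eq_tsum_fourier (hc : Continuous f) (hf : HasCompactSupport f)
    (hs : Summable fun p => 𝓕 f (gaussianPoint p)) :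
    ∑' p, f (gaussianPoint p) = ∑' p, 𝓕 f (gaussianPoint p) := by
  have hrow (k : ℤ) := tsum_fourier_gaussianPoint_row hc hf k (hs.prod_factor k)
  rw [tsum_gaussianPoint_eq_tsum_tsum_fourier_row hc hf (hs.prod.congr fun k => (hrow k).symm),
    tsum_congr hrow, hs.tsum_prod]

end Fourier

section BochnerRiesz

variable {V : Type*} [NormedAddCommGroup V] {α : ℝ}

/-- The Bochner–Riesz kernel `(T - ‖v‖²)₊ ^ α`, with values in `ℂ` so that it can be Fourier
transformed. -/
noncomputable def bochnerRiesz (α T : ℝ) (v : V) : ℂ := truncPow α (T - ‖v‖ ^ 2)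

theorem continuous_bochnerRiesz (hα : 0 ≤ α) (T : ℝ) : Continuous (bochnerRiesz α T : V → ℂ) :=
  Complex.continuous_ofReal.comp ((continuous_truncPow hα).comp (by fun_prop))

theorem bochnerRiesz_eq_zero (hα : α ≠ 0) {T : ℝ} {v : V} (hv : √T ≤ ‖v‖) :
    bochnerRiesz α T v = 0 := by
  have hTv : T ≤ ‖v‖ ^ 2 := (sqrt_le_left (norm_nonneg v)).1 hv
  rw [bochnerRiesz, truncPow_of_nonpos hα (sub_nonpos.2 hTv), Complex.ofReal_zero]

theorem hasCompactSupport_bochnerRiesz [ProperSpace V] (hα : α ≠ 0) (T : ℝ) :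
    HasCompactSupport (bochnerRiesz α T : V → ℂ) :=
  HasCompactSupport.intro (isCompact_closedBall 0 √T) fun v hv =>
    bochnerRiesz_eq_zero hα (le_of_lt (by simpa using hv))

theorem bochnerRiesz_add_mul_I (α T x y : ℝ) :
    bochnerRiesz α T (x + y * Complex.I : ℂ) = bochnerRiesz α (T - y ^ 2) x := by
  rw [bochnerRiesz, bochnerRiesz, Complex.norm_add_mul_I, sq_sqrt (by positivity), norm_eq_abs,
    sq_abs, ← sub_sub, sub_right_comm]

theorem integral_bochnerRiesz_mul (hα : α ≠ 0) {R : ℝ} (hR : 0 ≤ R) (g : ℝ → ℂ) :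
    ∫ x, bochnerRiesz α (R ^ 2) x * g x = ∫ x in -R..R, ((R ^ 2 - x ^ 2) ^ α : ℝ) * g x := by
  have hsupp : (Function.support fun x : ℝ => bochnerRiesz α (R ^ 2) x * g x) ⊆ Ioc (-R) R := by
    intro x hx
    by_contra hxR
    have hRx : √(R ^ 2) ≤ ‖x‖ := by
      rw [sqrt_sq hR, norm_eq_abs]
      exact not_lt.1 fun hlt => hxR ⟨(abs_lt.1 hlt).1, (abs_lt.1 hlt).2.le⟩
    exact hx (mul_eq_zero_of_left (bochnerRiesz_eq_zero hα hRx) _)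
  rw [← intervalIntegral.integral_eq_integral_of_support_subset hsupp]
  refine intervalIntegral.integral_congr fun x hx => ?_
  rw [uIcc_of_le (neg_le_self hR)] at hx
  have hxR : 0 ≤ R ^ 2 - x ^ 2 := sub_nonneg.2 (sq_le_sq' hx.1 hx.2)
  simp only [bochnerRiesz, norm_eq_abs, sq_abs, truncPow_of_nonneg hxR]

end BochnerRiesz

section Decay

theorem norm_integral_mul_cexp_le {w a b : ℝ} (hw : w ≠ 0) {u u' : ℝ → ℝ}
    (hu : ∀ x ∈ uIcc a b, HasDerivAt u (u' x) x) (hu' : IntervalIntegrable u' volume a b) :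
    ‖∫ x in a..b, u x * Complex.exp ((w * x : ℝ) * Complex.I)‖ ≤
      (|u a| + |u b| + ‖∫ x in a..b, u' x * Complex.exp ((w * x : ℝ) * Complex.I)‖) / |w| := by
  set e : ℝ → ℂ := fun x => Complex.exp ((w * x : ℝ) * Complex.I)
  have hnorm (x : ℝ) : ‖e x‖ = 1 := Complex.norm_exp_ofReal_mul_I _
  have he (x : ℝ) : HasDerivAt e (e x * (w * Complex.I)) x := by
    have hlin : HasDerivAt (fun x : ℝ => (w * x : ℝ) * Complex.I) (w * Complex.I) x := by
      simpa using (((hasDerivAt_id x).const_mul w).ofReal_comp).mul_const Complex.I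
    exact hlin.cexp
  have hparts : (∫ x in a..b, u x * e x) * (w * Complex.I) =
      u b * e b - u a * e a - ∫ x in a..b, u' x * e x := by
    have he' : Continuous fun x => e x * (w * Complex.I) := by fun_prop
    simp only [← intervalIntegral.integral_mul_const, mul_assoc]
    exact intervalIntegral.integral_mul_deriv_eq_deriv_mul (fun x hx => (hu x hx).ofReal_comp)
      (fun x _ => he x) ⟨hu'.1.ofReal, hu'.2.ofReal⟩ (he'.intervalIntegrable a b)
  rw [le_div_iff₀ (abs_pos.2 hw)]
  calc ‖∫ x in a..b, u x * e x‖ * |w| = ‖u b * e b - u a * e a - ∫ x in a..b, u' x * e x‖ := by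
        rw [← hparts, norm_mul, norm_mul, Complex.norm_I, mul_one, Complex.norm_real, norm_eq_abs]
    _ ≤ ‖u b * e b‖ + ‖u a * e a‖ + ‖∫ x in a..b, u' x * e x‖ :=
        (norm_sub_le _ _).trans (add_le_add_left (norm_sub_le _ _) _)
    _ = |u a| + |u b| + ‖∫ x in a..b, u' x * e x‖ := by
        simp only [norm_mul, hnorm, mul_one, Complex.norm_real, norm_eq_abs]
        ring

theorem norm_integral_mul_cexp_le_div_pow_three {w a b C : ℝ} (hw : w ≠ 0) (hab : a ≤ b)
    {u u' u'' u''' : ℝ → ℝ} (hu : ∀ x, HasDerivAt u (u' x) x) (hu' : ∀ x, HasDerivAt u' (u'' x) x)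
    (hu'' : ∀ x, HasDerivAt u'' (u''' x) x) (hu''' : Continuous u''')
    (ha : u a = 0) (hb : u b = 0) (ha' : u' a = 0) (hb' : u' b = 0)
    (hC : ∀ x ∈ Icc a b, |u''' x| ≤ C) :
    ‖∫ x in a..b, u x * Complex.exp ((w * x : ℝ) * Complex.I)‖ ≤
      (|u'' a| + |u'' b| + C * (b - a)) / |w| ^ 3 := by
  set J : (ℝ → ℝ) → ℝ := fun v => ‖∫ x in a..b, v x * Complex.exp ((w * x : ℝ) * Complex.I)‖
  have hparts {v v' : ℝ → ℝ} (hv : ∀ x, HasDerivAt v (v' x) x) (hv' : Continuous v') :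
      J v ≤ (|v a| + |v b| + J v') / |w| :=
    norm_integral_mul_cexp_le hw (fun x _ => hv x) (hv'.intervalIntegrable a b)
  have hcont {v v' : ℝ → ℝ} (hv : ∀ x, HasDerivAt v (v' x) x) : Continuous v :=
    continuous_iff_continuousAt.2 fun x => (hv x).continuousAt
  have h₁ : J u ≤ J u' / |w| := by simpa [ha, hb] using hparts hu (hcont hu')
  have h₂ : J u' ≤ J u'' / |w| := by simpa [ha', hb'] using hparts hu' (hcont hu'')
  have h₃ : J u'' ≤ (|u'' a| + |u'' b| + J u''') / |w| := hparts hu'' hu'''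
  have h₄ : J u''' ≤ C * (b - a) := by
    rw [← abs_of_nonneg (sub_nonneg.2 hab)]
    refine intervalIntegral.norm_integral_le_of_norm_le_const fun x hx => ?_
    rw [uIoc_of_le hab] at hx
    rw [norm_mul, Complex.norm_exp_ofReal_mul_I, mul_one, Complex.norm_real]
    exact hC x ⟨hx.1.le, hx.2⟩
  calc J u ≤ J u'' / |w| / |w| := h₁.trans (by gcongr)
    _ ≤ (|u'' a| + |u'' b| + C * (b - a)) / |w| / |w| / |w| := by
        gcongr
        exact h₃.trans (by gcongr)
    _ = (|u'' a| + |u'' b| + C * (b - a)) / |w| ^ 3 := by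
        rw [div_div, div_div, pow_three]

theorem norm_integral_sq_sub_sq_mul_cexp_le {w R : ℝ} (hw : w ≠ 0) (hR : 0 ≤ R) :
    ‖∫ s in -R..R, ((R ^ 2 - s ^ 2) ^ 2 : ℝ) * Complex.exp ((w * s : ℝ) * Complex.I)‖ ≤
      64 * R ^ 2 / |w| ^ 3 := by
  have hd₁ (s : ℝ) : HasDerivAt (fun s => (R ^ 2 - s ^ 2) ^ 2) (-4 * s * (R ^ 2 - s ^ 2)) s := by
    convert! ((hasDerivAt_pow 2 s).const_sub (R ^ 2)).pow 2 using 1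
    push_cast
    ring
  have hd₂ (s : ℝ) :
      HasDerivAt (fun s => -4 * s * (R ^ 2 - s ^ 2)) (12 * s ^ 2 - 4 * R ^ 2) s := by
    convert! ((hasDerivAt_id s).const_mul (-4)).mul ((hasDerivAt_pow 2 s).const_sub (R ^ 2)) using 1
    simp only [id, Nat.cast_ofNat]
    ring
  have hd₃ (s : ℝ) : HasDerivAt (fun s => 12 * s ^ 2 - 4 * R ^ 2) (24 * s) s := by
    convert! ((hasDerivAt_pow 2 s).const_mul 12).sub_const (4 * R ^ 2) using 1
    push_cast
    ring
  have hC (s : ℝ) (hs : s ∈ Icc (-R) R) : |24 * s| ≤ 24 * R := by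
    rw [abs_mul, abs_of_pos (by norm_num)]
    gcongr
    exact abs_le.2 hs
  have hend : |12 * R ^ 2 - 4 * R ^ 2| = 8 * R ^ 2 := by
    rw [← sub_mul, abs_of_nonneg (by positivity)]
    norm_num
  refine (norm_integral_mul_cexp_le_div_pow_three hw (neg_le_self hR) hd₁ hd₂ hd₃ (by fun_prop)
    (by simp) (by simp) (by simp) (by simp) hC).trans_eq ?_
  rw [neg_sq, hend]
  ring

end Decay

section FourierBochnerRiesz

theorem integral_sq_sub_sq_rpow_three_halves {R : ℝ} (hR : 0 ≤ R) :
    ∫ s in -R..R, (R ^ 2 - s ^ 2) ^ (3 / 2 : ℝ) = 3 * π / 8 * R ^ 4 := by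
  have hsubst := intervalIntegral.integral_comp_mul_deriv (a := -(π / 2)) (b := π / 2)
    (g := fun s => (R ^ 2 - s ^ 2) ^ (3 / 2 : ℝ)) (fun θ _ => (hasDerivAt_sin θ).const_mul R)
    (by fun_prop) (Continuous.rpow_const (by fun_prop) fun _ => Or.inr (by norm_num))
  have hpow (θ : ℝ) (hθ : θ ∈ uIcc (-(π / 2)) (π / 2)) :
      ((fun s => (R ^ 2 - s ^ 2) ^ (3 / 2 : ℝ)) ∘ fun θ => R * sin θ) θ * (R * cos θ) =
        R ^ 4 * cos θ ^ 4 := by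
    rw [uIcc_of_le (by linarith [pi_pos])] at hθ
    have hnonneg : 0 ≤ R * cos θ := mul_nonneg hR (cos_nonneg_of_mem_Icc hθ)
    have hsq : R ^ 2 - (R * sin θ) ^ 2 = (R * cos θ) ^ (2 : ℝ) := by
      rw [rpow_two, mul_pow, mul_pow, cos_sq']
      ring
    have hcube : (R ^ 2 - (R * sin θ) ^ 2) ^ (3 / 2 : ℝ) = (R * cos θ) ^ 3 := by
      rw [hsq, ← rpow_mul hnonneg, ← rpow_natCast]
      norm_num
    rw [Function.comp_apply, hcube]
    ring
  have hcos : ∫ θ in -(π / 2)..π / 2, cos θ ^ 4 = 3 * π / 8 := by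
    rw [integral_cos_pow, integral_cos_sq, cos_neg, cos_pi_div_two]
    push_cast
    ring
  rw [intervalIntegral.integral_congr hpow, intervalIntegral.integral_const_mul, hcos] at hsubst
  simpa [mul_comm] using hsubst.symm

theorem integral_bochnerRiesz_three_halves (A : ℝ) :
    ∫ x : ℝ, bochnerRiesz (3 / 2) A x = (3 * π / 8 * truncPow 2 A : ℝ) := by
  have hα : (3 / 2 : ℝ) ≠ 0 := by norm_num
  rcases le_total A 0 with hA | hA
  · have hzero (x : ℝ) : bochnerRiesz (3 / 2) A x = 0 :=
      bochnerRiesz_eq_zero hα (by simp [sqrt_eq_zero'.2 hA])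
    simp only [hzero, integral_zero, truncPow_of_nonpos two_ne_zero hA, mul_zero,
      Complex.ofReal_zero]
  · have h := integral_bochnerRiesz_mul hα (sqrt_nonneg A) fun _ => 1
    simp only [mul_one, intervalIntegral.integral_ofReal] at h
    rw [integral_sq_sub_sq_rpow_three_halves (sqrt_nonneg A), sq_sqrt hA] at h
    have hpow : √A ^ 4 = A ^ 2 := by rw [← sq_sqrt hA, ← pow_mul, sqrt_sq (sqrt_nonneg A)]
    rw [h, hpow, truncPow_of_nonneg hA, rpow_two]

theorem fourier_bochnerRiesz_three_halves (T : ℝ) (w : ℂ) :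
    𝓕 (bochnerRiesz (3 / 2) T : ℂ → ℂ) w =
      (3 * π / 8 : ℝ) * 𝓕 (bochnerRiesz 2 T : ℝ → ℂ) ‖w‖ := by
  have hα : (0 : ℝ) < 3 / 2 := by norm_num
  have hint : Integrable (bochnerRiesz (3 / 2) T : ℂ → ℂ) :=
    (continuous_bochnerRiesz hα.le T).integrable_of_hasCompactSupport
      (hasCompactSupport_bochnerRiesz hα.ne' T)
  have hradial : 𝓕 (bochnerRiesz (3 / 2) T : ℂ → ℂ) w =
      𝓕 (bochnerRiesz (3 / 2) T : ℂ → ℂ) ((0 : ℝ) + ‖w‖ * Complex.I) :=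
    fourier_eq_of_norm_eq (fun u v huv => by rw [bochnerRiesz, bochnerRiesz, huv]) (by simp)
  have hinner (y : ℝ) : 𝓕 (fun x : ℝ => bochnerRiesz (3 / 2) T (x + y * Complex.I : ℂ)) 0 =
      (3 * π / 8 : ℝ) * bochnerRiesz 2 T y := by
    simp only [Real.fourier_real_eq, mul_zero, neg_zero, AddChar.map_zero_eq_one, one_smul,
      bochnerRiesz_add_mul_I, integral_bochnerRiesz_three_halves]
    rw [bochnerRiesz, norm_eq_abs, sq_abs, Complex.ofReal_mul]
  rw [hradial, fourier_add_mul_I_eq_fourier_fourier hint]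
  simp only [hinner, Real.fourier_real_eq, Circle.smul_def, smul_eq_mul,
    mul_left_comm _ ((3 * π / 8 : ℝ) : ℂ), integral_const_mul]

theorem fourier_bochnerRiesz_two {R : ℝ} (hR : 0 ≤ R) (ρ : ℝ) :
    𝓕 (bochnerRiesz 2 (R ^ 2) : ℝ → ℂ) ρ =
      ∫ s in -R..R, ((R ^ 2 - s ^ 2) ^ 2 : ℝ) *
        Complex.exp ((-2 * π * ρ * s : ℝ) * Complex.I) := by
  simp only [Real.fourier_real_eq_integral_exp_smul, smul_eq_mul]
  simp only [mul_comm _ (bochnerRiesz _ _ _), integral_bochnerRiesz_mul two_ne_zero hR, rpow_two,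
    mul_right_comm _ _ ρ]

theorem norm_fourier_bochnerRiesz_two_le {R ρ : ℝ} (hR : 0 ≤ R) (hρ : ρ ≠ 0) :
    ‖𝓕 (bochnerRiesz 2 (R ^ 2) : ℝ → ℂ) ρ‖ ≤ 64 * R ^ 2 / |2 * π * ρ| ^ 3 := by
  have hw : -2 * π * ρ ≠ 0 := by simp [pi_ne_zero, hρ]
  rw [fourier_bochnerRiesz_two hR, ← abs_neg (2 * π * ρ), ← neg_mul, ← neg_mul]
  exact norm_integral_sq_sub_sq_mul_cexp_le hw hR

theorem fourier_bochnerRiesz_two_zero {R : ℝ} (hR : 0 ≤ R) :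
    𝓕 (bochnerRiesz 2 (R ^ 2) : ℝ → ℂ) 0 = (16 / 15 * R ^ 5 : ℝ) := by
  have hprimitive (s : ℝ) : HasDerivAt (fun s => R ^ 4 * s - 2 / 3 * R ^ 2 * s ^ 3 + s ^ 5 / 5)
      ((R ^ 2 - s ^ 2) ^ 2) s := by
    convert! (((hasDerivAt_id s).const_mul (R ^ 4)).sub
      ((hasDerivAt_pow 3 s).const_mul (2 / 3 * R ^ 2))).add ((hasDerivAt_pow 5 s).div_const 5)
      using 1
    push_cast
    ring
  have hintegral : ∫ s in -R..R, (R ^ 2 - s ^ 2) ^ 2 = 16 / 15 * R ^ 5 := by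
    rw [intervalIntegral.integral_eq_sub_of_hasDerivAt (fun s _ => hprimitive s)
      (Continuous.intervalIntegrable (by fun_prop) _ _)]
    ring
  rw [fourier_bochnerRiesz_two hR, ← hintegral]
  simp only [mul_zero, zero_mul, Complex.ofReal_zero, Complex.exp_zero, mul_one,
    intervalIntegral.integral_ofReal]

theorem norm_fourier_bochnerRiesz_three_halves_le {T : ℝ} (hT : 0 ≤ T) {w : ℂ} (hw : w ≠ 0) :
    ‖𝓕 (bochnerRiesz (3 / 2) T : ℂ → ℂ) w‖ ≤ T * ‖w‖ ^ (-3 : ℝ) := by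
  have hw' : 0 < ‖w‖ := norm_pos_iff.2 hw
  have h := norm_fourier_bochnerRiesz_two_le (sqrt_nonneg T) hw'.ne'
  rw [sq_sqrt hT] at h
  rw [fourier_bochnerRiesz_three_halves, norm_mul, Complex.norm_real,
    norm_of_nonneg (by positivity)]
  calc 3 * π / 8 * ‖𝓕 (bochnerRiesz 2 T : ℝ → ℂ) ‖w‖‖
      ≤ 3 * π / 8 * (64 * T / |2 * π * ‖w‖| ^ 3) := by gcongr
    _ = 3 / π ^ 2 * (T * ‖w‖ ^ (-3 : ℝ)) := by
        rw [abs_of_pos (by positivity), rpow_neg hw'.le, rpow_ofNat]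
        field_simp
        ring
    _ ≤ T * ‖w‖ ^ (-3 : ℝ) := by
        refine mul_le_of_le_one_left (by positivity) ((div_le_one (by positivity)).2 ?_)
        nlinarith [pi_gt_three]

theorem fourier_bochnerRiesz_three_halves_zero {T : ℝ} (hT : 0 ≤ T) :
    𝓕 (bochnerRiesz (3 / 2) T : ℂ → ℂ) 0 = (π / (3 / 2 + 1) * T ^ (3 / 2 + 1 : ℝ) : ℝ) := by
  have h := fourier_bochnerRiesz_two_zero (sqrt_nonneg T)
  have hpow : √T ^ 5 = T ^ (3 / 2 + 1 : ℝ) := by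
    rw [sqrt_eq_rpow, ← rpow_natCast, ← rpow_mul hT]
    norm_num
  rw [sq_sqrt hT, hpow] at h
  rw [fourier_bochnerRiesz_three_halves, norm_zero, h, ← Complex.ofReal_mul]
  congr 1
  ring

end FourierBochnerRiesz

section Asymptotic

theorem norm_tsum_gaussianPoint_sub_fourier_zero_le {f : ℂ → ℂ} (hc : Continuous f)
    (hf : HasCompactSupport f) {M s : ℝ} (hs : 2 < s)
    (hM : ∀ w ≠ 0, ‖𝓕 f w‖ ≤ M * ‖w‖ ^ (-s)) :
    ‖∑' p, f (gaussianPoint p) - 𝓕 f 0‖ ≤ M * ∑' p, ‖gaussianPoint p‖ ^ (-s) := by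
  have hzero : gaussianPoint 0 = 0 := by simp [gaussianPoint]
  set g : ℤ × ℤ → ℂ := fun p => if p = 0 then 0 else 𝓕 f (gaussianPoint p)
  have hsummable := (summable_norm_gaussianPoint_rpow hs).mul_left M
  have hg (p : ℤ × ℤ) : ‖g p‖ ≤ M * ‖gaussianPoint p‖ ^ (-s) := by
    rcases eq_or_ne p 0 with rfl | hp
    · simp [g, hzero, zero_rpow (by linarith : -s ≠ 0)]
    · simpa only [g, if_neg hp] using hM _ (gaussianPoint_ne_zero hp)
  have hsF : Summable fun p => 𝓕 f (gaussianPoint p) :=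
    .of_norm_bounded_eventually hsummable <| by
      filter_upwards [(finite_singleton (0 : ℤ × ℤ)).compl_mem_cofinite] with p hp
      exact hM _ (gaussianPoint_ne_zero hp)
  rw [tsum_gaussianPoint_eq_tsum_fourier hc hf hsF, hsF.tsum_eq_add_tsum_ite 0, hzero,
    add_sub_cancel_left]
  exact (tsum_of_norm_bounded hsummable.hasSum hg).trans_eq tsum_mul_left

theorem abs_rieszError_three_halves_le {T : ℝ} (hT : 0 ≤ T) :
    |rieszError (3 / 2) T| ≤ (∑' p, ‖gaussianPoint p‖ ^ (-3 : ℝ)) * T := by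
  have hα : (0 : ℝ) < 3 / 2 := by norm_num
  have h := norm_tsum_gaussianPoint_sub_fourier_zero_le (continuous_bochnerRiesz hα.le T)
    (hasCompactSupport_bochnerRiesz hα.ne' T) (by norm_num : (2 : ℝ) < 3)
    fun w hw => norm_fourier_bochnerRiesz_three_halves_le hT hw
  have herror : ∑' p, bochnerRiesz (3 / 2) T (gaussianPoint p) -
      𝓕 (bochnerRiesz (3 / 2) T : ℂ → ℂ) 0 = (rieszError (3 / 2) T : ℝ) := by
    rw [fourier_bochnerRiesz_three_halves_zero hT, rieszError,
      rieszSum_eq_tsum_gaussianPoint hα.ne' hT, Complex.ofReal_sub, Complex.ofReal_tsum]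
    rfl
  rwa [herror, Complex.norm_real, norm_eq_abs, mul_comm] at h

theorem abs_rieszError_le {K : ℝ}
    (hbase : ∀ T, 0 ≤ T → |rieszError (3 / 2) T| ≤ K * T) {n : ℕ} (hn : 1 ≤ n) :
    ∀ T, 0 ≤ T → |rieszError (n + 1 / 2) T| ≤ K * n * T ^ n := by
  have hK : 0 ≤ K := by simpa using (abs_nonneg _).trans (hbase 1 zero_le_one)
  induction n, hn using Nat.le_induction with
  | base =>
    have hexp : ((1 : ℕ) + 1 / 2 : ℝ) = 3 / 2 := by norm_num
    rw [hexp]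
    simpa only [Nat.cast_one, mul_one, pow_one] using hbase
  | succ n hn ih =>
    intro T hT
    have hn' : (1 : ℝ) ≤ n := by exact_mod_cast hn
    have hexp : ((n + 1 : ℕ) + 1 / 2 : ℝ) = n + 1 / 2 + 1 := by
      push_cast
      ring
    rw [hexp]
    calc |rieszError (n + 1 / 2 + 1) T|
        ≤ (n + 1 / 2 + 1) * (K * n * (T ^ (n + 1) / (n + 1))) :=
          abs_rieszError_add_one_le (by positivity) ih hT
      _ = K * T ^ (n + 1) * ((n + 1 / 2 + 1) * n / (n + 1)) := by ring
      _ ≤ K * T ^ (n + 1) * (n + 1) := by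
          gcongr
          rw [div_le_iff₀ (by positivity)]
          nlinarith
      _ = K * (n + 1 : ℕ) * T ^ (n + 1) := by
          push_cast
          ring

theorem abs_Ccoef_le {n : ℕ} (hn : 1 ≤ n) : |Ccoef n| ≤ 1 / (2 ^ n * n) := by
  have hfactor (k : ℕ) (hk : k ∈ Finset.Icc 1 (n - 1)) :
      0 ≤ 1 - 1 / (2 * (k : ℝ)) ∧ 1 - 1 / (2 * (k : ℝ)) ≤ 1 := by
    have hk' : (1 : ℝ) ≤ k := by exact_mod_cast (Finset.mem_Icc.1 hk).1
    refine ⟨?_, sub_le_self _ (by positivity)⟩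
    rw [sub_nonneg, div_le_one (by positivity)]
    linarith
  have hprod_nonneg := Finset.prod_nonneg fun k hk => (hfactor k hk).1
  have hprod_le := Finset.prod_le_one (fun k hk => (hfactor k hk).1) fun k hk => (hfactor k hk).2
  rw [Ccoef, if_neg (by lia), abs_mul, abs_neg, abs_of_nonneg hprod_nonneg,
    abs_of_pos (by positivity)]
  refine (mul_le_of_le_one_right (by positivity) hprod_le).trans ?_
  gcongr
  exact le_mul_of_one_le_left (by positivity) (one_le_sqrt.2 one_le_two)

theorem cn_eq_Ccoef_mul {n : ℕ} (hn : 1 ≤ n) : cn n = Ccoef n * (π / (n + 3 / 2)) := by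
  rw [cn, Ccoef, if_neg (by lia)]
  field_simp

theorem Sxn_sub_cn_mul {n : ℕ} (hn : 1 ≤ n) {x : ℝ} (hx : 0 < x) :
    Sxn x n - cn n * x = Ccoef n * x ^ ((1 : ℝ) / 4 - n / 2) * rieszError (n + 1 / 2) √x := by
  have hexp : (n + 1 / 2 + 1 : ℝ) = n + 3 / 2 := by ring
  have hone : (1 : ℝ) / 4 - n / 2 + 1 / 2 * (n + 3 / 2) = 1 := by ring
  have hpow : x ^ ((1 : ℝ) / 4 - n / 2) * √x ^ (n + 3 / 2 : ℝ) = x := by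
    rw [sqrt_eq_rpow, ← rpow_mul hx.le, ← rpow_add hx, hone, rpow_one]
  rw [cn_eq_Ccoef_mul hn, Sxn, rieszError, hexp, rieszSum]
  linear_combination Ccoef n * (π / (n + 3 / 2)) * hpow

theorem Sxn_asymptotic_general :
    ∃ K : ℝ, 0 < K ∧ ∀ n : ℕ, 1 ≤ n → ∀ x : ℝ, 0 < x →
      |Sxn x n - cn n * x| ≤ K * (2 : ℝ) ^ (-(n : ℝ)) * x ^ ((1 : ℝ) / 4) := by
  set K : ℝ := ∑' p, ‖gaussianPoint p‖ ^ (-3 : ℝ)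
  have hK : 0 < K := (summable_norm_gaussianPoint_rpow (by norm_num)).tsum_pos
    (fun p => by positivity) (1, 0) (by simp [gaussianPoint])
  refine ⟨K, hK, fun n hn x hx => ?_⟩
  have hn' : (n : ℝ) ≠ 0 := Nat.cast_ne_zero.2 (by lia)
  have herror := abs_rieszError_le (fun T hT => abs_rieszError_three_halves_le hT) hn √x
    (sqrt_nonneg x)
  have hpow : x ^ ((1 : ℝ) / 4 - n / 2) * √x ^ n = x ^ ((1 : ℝ) / 4) := by
    rw [← rpow_natCast, sqrt_eq_rpow, ← rpow_mul hx.le, ← rpow_add hx]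
    ring_nf
  calc |Sxn x n - cn n * x|
      = |Ccoef n| * x ^ ((1 : ℝ) / 4 - n / 2) * |rieszError (n + 1 / 2) √x| := by
        rw [Sxn_sub_cn_mul hn hx, abs_mul, abs_mul, abs_of_pos (rpow_pos_of_pos hx _)]
    _ ≤ 1 / (2 ^ n * n) * x ^ ((1 : ℝ) / 4 - n / 2) * (K * n * √x ^ n) := by
        gcongr
        exact abs_Ccoef_le hn
    _ = K * (2 : ℝ) ^ (-(n : ℝ)) * x ^ ((1 : ℝ) / 4) := by
        rw [← hpow, rpow_neg zero_le_two, rpow_natCast]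
        field_simp [hn']

end Asymptotic

/-- There are an absolute constant `K > 0` and `x₀ ≥ 1` such that for every `n ≥ 1`
and every `x ≥ x₀`, `|S(√x; n) − cₙ·x| ≤ K·2^{−n}·x^{1/4}`. -/
theorem Sxn_asymptotic :
    ∃ K : ℝ, 0 < K ∧ ∃ x₀ : ℝ, 1 ≤ x₀ ∧
      ∀ n : ℕ, 1 ≤ n → ∀ x : ℝ, x₀ ≤ x →
        |Sxn x n - cn n * x| ≤ K * (2 : ℝ) ^ (-(n : ℝ)) * x ^ ((1 : ℝ) / 4) := by
  obtain ⟨K, hK, hbound⟩ := Sxn_asymptotic_general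
  exact ⟨K, hK, 1, le_rfl, fun n hn x hx => hbound n hn x (one_pos.trans_le hx)⟩
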